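/- In the setting of a fixed torsion-free knapsack expression E = g₁^{x₁}⋯g_k^{x_k}g_{k+1} over G ≀ H with variable partition V_E = S ⊎ M: let ν = μ ⊕ κ with μ ∈ ℕ^M and κ ∈ ℕ^S, let h ∈ H, and let C = A_{μ,h}. Then τ(ν(E))(h) = κ(E_C). -/

import Mathlib

namespace WreathPaper

open Function

variable (G H : Type*) [Group G] [Group H]

/-- The automorphism of `H → G` (pointwise multiplication) given by translation by `h`. -/
def wreathAut (h : H) : MulAut (H → G) where
  toFun f := fun a => f (h⁻¹ * a)
  invFun f := fun a => f (h * a)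
  left_inv f := by funext a; simp
  right_inv f := by funext a; simp
  map_mul' f g := rfl

/-- The action of `H` on `H → G` by translation, as a homomorphism into `MulAut`. -/
def wreathphi : H →* MulAut (H → G) where
  toFun := wreathAut G H
  map_one' := by
    apply MulEquiv.toMonoidHom_injective
    ext f a
    simp [wreathAut]
  map_mul' h₁ h₂ := by
    apply MulEquiv.toMonoidHom_injective
    ext f a
    simp [wreathAut, mul_assoc]

lemma finite_mulSupport_shift {f : H → G} (hf : (mulSupport f).Finite) (h : H) :
    (mulSupport fun a => f (h * a)).Finite := by
  have : (fun a : H => f (h * a)) = f ∘ (fun a => h * a) := rfl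
  rw [this, Function.mulSupport_comp_eq_preimage]
  exact hf.preimage (fun x _ y _ hxy => by simpa using hxy)

/-- The restricted wreath product `G ≀ H`, as the subgroup of the (unrestricted)
semidirect product `(H → G) ⋊ H` consisting of pairs whose first component has
finite support. -/
def RW : Subgroup ((H → G) ⋊[wreathphi G H] H) where
  carrier := {x | (mulSupport x.left).Finite}
  one_mem' := by
    simp only [Set.mem_setOf_eq, SemidirectProduct.one_left]
    simp
  mul_mem' := by
    intro a b ha hb
    simp only [Set.mem_setOf_eq, SemidirectProduct.mul_left] at *
    refine Set.Finite.subset (Set.Finite.union ha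
      (finite_mulSupport_shift G H hb a.right⁻¹)) ?_
    exact Function.mulSupport_mul _ _
  inv_mem' := by
    intro a ha
    simp only [Set.mem_setOf_eq, SemidirectProduct.inv_left] at *
    have : (wreathphi G H a.right⁻¹ a.left⁻¹ : H → G)
        = fun x => (a.left (a.right * x))⁻¹ := by
      funext x
      simp [wreathphi, wreathAut]
    rw [this]
    have h2 : (mulSupport fun x => (a.left (a.right * x))⁻¹)
        = mulSupport fun x => a.left (a.right * x) := by
      simp [Function.mulSupport_inv]
    rw [h2]
    exact finite_mulSupport_shift G H ha a.right

/-- The projection `σ : G ≀ H → H`. -/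
def σw (x : RW G H) : H := (x : (H → G) ⋊[wreathphi G H] H).right

/-- The projection `τ : G ≀ H → G^(H)`. -/
def τw (x : RW G H) : H → G := (x : (H → G) ⋊[wreathphi G H] H).left

/-- The canonical embedding of `G` into `G ≀ H`: `g ↦ (f_g, 1)`. -/
def embG [DecidableEq H] (g : G) : RW G H :=
  ⟨⟨Pi.mulSingle (1 : H) g, 1⟩, by
    exact Set.Finite.subset (Set.finite_singleton (1 : H))
      Pi.mulSupport_mulSingle_subset⟩

/-- The canonical embedding of `H` into `G ≀ H`: `h ↦ (𝟙, h)`. -/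
def embH (h : H) : RW G H :=
  ⟨⟨1, h⟩, by simp [RW]⟩

end WreathPaper

namespace WreathPaper

variable {G H : Type*} [Group G] [Group H] {k : ℕ}

/-- The type of addresses of the torsion-free knapsack expression
`E = g₁^{x₁} ⋯ g_k^{x_k} g_{k+1}` (with bases `g 0, …, g k`): pairs `(i, h)`
with `i ∈ [1, k+1]` and `h ∈ supp(gᵢ)`. -/
def Addr (g : Fin (k + 1) → ↥(RW G H)) : Type _ :=
  {p : Fin (k + 1) × H // p.2 ∈ Function.mulSupport (τw G H (g p.1))}

/-- The evaluation `ν(E) = g₁^{ν(x₁)} ⋯ g_k^{ν(x_k)} g_{k+1}`. -/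
def evalE (g : Fin (k + 1) → ↥(RW G H)) (ν : Fin k → ℕ) : ↥(RW G H) :=
  ((List.finRange k).map fun i => g i.castSucc ^ ν i).prod * g (Fin.last k)

/-- The prefix product `σ(g₁)^{ν(x₁)} ⋯ σ(g_j)^{ν(x_j)}`. -/
def headProd (g : Fin (k + 1) → ↥(RW G H)) (ν : Fin k → ℕ) (j : ℕ) : H :=
  (((List.finRange k).take j).map fun i => σw G H (g i.castSucc) ^ ν i).prod

/-- The evaluation at `ν` of the expression `τ(a)` over `G` associated with the
address `a = (i, h)`: it is `τ(g_{k+1})(h)` if `i = k+1`, the power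
`(τ(gᵢ)(h))^{ν(xᵢ)}` if `i ≤ k` and `σ(gᵢ) = 1`, and `τ(gᵢ)(h)` if `i ≤ k`
and `σ(gᵢ) ≠ 1` (i.e. `σ(gᵢ)` of infinite order).  It only depends on the
components of `ν` belonging to `S = {xᵢ : σ(gᵢ) = 1}`. -/
noncomputable def tauVal (g : Fin (k + 1) → ↥(RW G H)) (a : Addr g)
    (ν : Fin k → ℕ) : G :=
  letI := Classical.propDecidable (σw G H (g a.1.1) = 1)
  if hlt : (a.1.1 : ℕ) < k then
    if σw G H (g a.1.1) = 1 then τw G H (g a.1.1) a.1.2 ^ ν ⟨a.1.1, hlt⟩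
    else τw G H (g a.1.1) a.1.2
  else τw G H (g a.1.1) a.1.2

/-- The set `A_{μ,h}` of all addresses `a` such that `μ'(σ(a)) = h` for some
`μ' ⊏ μ`, where `σ(a) = σ(g₁)^{x₁} ⋯ σ(g_k)^{x_k} h'` for `a = (k+1, h')` and
`σ(a) = σ(g₁)^{x₁} ⋯ σ(g_{i−1})^{x_{i−1}} σ(gᵢ)^{yᵢ} h'` for `a = (i, h')`,
`i ≤ k` (the variable `yᵢ`, present only when `σ(gᵢ)` has infinite order,
ranges over `[0, μ(xᵢ) − 1]`; factors with base `1` evaluate to `1`).  Only the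
components of `ν` belonging to `M = {xᵢ : σ(gᵢ) ≠ 1}` are relevant. -/
def clusterAt (g : Fin (k + 1) → ↥(RW G H)) (ν : Fin k → ℕ) (h : H) :
    Set (Addr g) :=
  {a | if hlt : (a.1.1 : ℕ) < k then
        ∃ y : ℕ, (σw G H (g a.1.1) ≠ 1 → y < ν ⟨a.1.1, hlt⟩) ∧
          headProd g ν (a.1.1 : ℕ) * σw G H (g a.1.1) ^ y * a.1.2 = h
      else headProd g ν k * a.1.2 = h}

/-- `le` is an admissible linear order on the addresses: a linear order such
that `(i, h) ≤ (j, h')` whenever `i < j`, and such that for `i ≤ k` with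
`σ(gᵢ)` nontrivial (hence of infinite order), `h ≼_{σ(gᵢ)} h'` implies
`(i, h) ≤ (i, h')`. -/
def GoodOrder (g : Fin (k + 1) → ↥(RW G H)) (le : Addr g → Addr g → Prop) :
    Prop :=
  (∀ a b, le a b ∨ le b a) ∧
  (∀ a b c, le a b → le b c → le a c) ∧
  (∀ a b, le a b → le b a → a = b) ∧
  (∀ a b : Addr g, a.1.1 < b.1.1 → le a b) ∧
  (∀ a b : Addr g, a.1.1 = b.1.1 → (a.1.1 : ℕ) < k → σw G H (g a.1.1) ≠ 1 →
      (∃ n : ℕ, a.1.2 = σw G H (g a.1.1) ^ n * b.1.2) → le a b)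

/-- `prodOver g le C κ v` says that the evaluation `κ(E_C)` of the expression
`E_C = ∏_{a ∈ C} τ(a)` — the product over `C` taken in increasing `le`-order,
expressed via an `le`-sorted duplicate-free enumeration of `C` — equals `v`. -/
def prodOver (g : Fin (k + 1) → ↥(RW G H)) (le : Addr g → Addr g → Prop)
    (C : Set (Addr g)) (κ : Fin k → ℕ) (v : G) : Prop :=
  ∃ l : List (Addr g), l.Nodup ∧ (∀ x, x ∈ l ↔ x ∈ C) ∧ l.Pairwise le ∧
    (l.map fun a => tauVal g a κ).prod = v

end WreathPaper

/-!
Reading `E` as `k + 1` blocks `gᵢ ^ eᵢ`, with `e` equal to `ν` extended by `1` at the last index,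
the value of `τ(ν(E))` at `h` is the product over `i` of the values of `τ(gᵢ ^ eᵢ)` at
`headProdᵢ⁻¹ * h`. Each of these unfolds into the product of the values of `τ(gᵢ)` at the points
`σ(gᵢ)^(-y) * headProdᵢ⁻¹ * h` for `y < eᵢ`. If `σ(gᵢ)` has infinite order, these points are
distinct and `≼`-increasing in `y`; if `σ(gᵢ) = 1`, they all coincide and contribute a single power.
The addresses of `A_{μ,h}` are exactly those points at which `τ(gᵢ)` is nontrivial, and the order in
which they are read is forced by the two compatibility conditions on `≤`.
-/

namespace WreathPaper

section WreathProduct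

variable {G H : Type*} [Group G] [Group H]

lemma τw_one (h : H) : τw G H 1 h = 1 := rfl

lemma τw_mul (x y : RW G H) (h : H) :
    τw G H (x * y) h = τw G H x h * τw G H y ((σw G H x)⁻¹ * h) := rfl

lemma σw_pow (x : RW G H) (n : ℕ) : σw G H (x ^ n) = σw G H x ^ n :=
  map_pow (SemidirectProduct.rightHom.comp (RW G H).subtype) x n

lemma τw_pow (x : RW G H) (n : ℕ) (h : H) :
    τw G H (x ^ n) h
      = ((List.range n).map fun y => τw G H x ((σw G H x ^ y)⁻¹ * h)).prod := by
  induction n with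
  | zero => exact τw_one h
  | succ n ih => rw [pow_succ, τw_mul, ih, σw_pow, List.prod_range_succ]

lemma τw_prod_ofFn {n : ℕ} (x : Fin n → RW G H) (h : H) :
    τw G H (List.ofFn x).prod h
      = (List.ofFn fun i =>
          τw G H (x i) ((Fin.partialProd (fun j => σw G H (x j)) i.castSucc)⁻¹ * h)).prod := by
  induction n generalizing h with
  | zero => simp [τw_one]
  | succ n ih =>
    simp only [List.ofFn_succ, List.prod_cons, τw_mul, ih, Fin.castSucc_zero,
      Fin.partialProd_zero, inv_one, one_mul, ← Fin.succ_castSucc, Fin.partialProd_succ',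
      mul_inv_rev, mul_assoc, Fin.tail_def]

end WreathProduct

lemma pairwise_map_range_pow_inv_mul {H : Type*} [Group H] {s : H}
    (hs : Function.Injective fun n : ℕ => s ^ n) (p : H) (n : ℕ) :
    ((List.range n).map fun y => (s ^ y)⁻¹ * p).Pairwise
      fun q r => q ≠ r ∧ ∃ m : ℕ, q = s ^ m * r := by
  refine List.pairwise_map.2 (List.pairwise_lt_range.imp fun {y z} hyz => ⟨fun heq => ?_, ?_⟩)
  · exact hyz.ne (hs (inv_injective (mul_right_cancel heq)))
  · obtain ⟨c, rfl⟩ := Nat.exists_eq_add_of_lt hyz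
    exact ⟨c + 1, by rw [add_assoc, add_comm y, pow_add]; group⟩

section Expression

variable {G H : Type*} [Group G] [Group H] {k : ℕ}

/-- The address `(i, p)`; unlike an anonymous constructor, it has type `Addr g` without unfolding
`Addr`. -/
def Addr.mk {g : Fin (k + 1) → RW G H} (i : Fin (k + 1)) (p : H)
    (hp : p ∈ Function.mulSupport (τw G H (g i))) : Addr g :=
  ⟨(i, p), hp⟩

@[simp]
lemma Addr.val_mk {g : Fin (k + 1) → RW G H} (i : Fin (k + 1)) (p : H)
    (hp : p ∈ Function.mulSupport (τw G H (g i))) : (Addr.mk i p hp).1 = (i, p) := rfl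

lemma Addr.exists_eq_mk {g : Fin (k + 1) → RW G H} (a : Addr g) :
    ∃ i p, ∃ hp : p ∈ Function.mulSupport (τw G H (g i)), a = Addr.mk i p hp :=
  ⟨a.1.1, a.1.2, a.2, rfl⟩

variable (g : Fin (k + 1) → RW G H) (ν : Fin k → ℕ)

/-- The exponents of all `k + 1` factors of `ν(E)`: the factor `g_{k+1}`, which carries no variable,
is given the exponent `1` so that it can be treated like the others. -/
def exponent : Fin (k + 1) → ℕ :=
  Fin.snoc (α := fun _ => ℕ) ν 1

@[simp]
lemma exponent_castSucc (i : Fin k) : exponent ν i.castSucc = ν i :=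
  Fin.snoc_castSucc (α := fun _ => ℕ) ..

@[simp]
lemma exponent_last : exponent ν (Fin.last k) = 1 :=
  Fin.snoc_last (α := fun _ => ℕ) ..

lemma evalE_eq_prod_ofFn :
    evalE g ν = (List.ofFn fun i => g i ^ exponent ν i).prod := by
  rw [List.ofFn_succ']
  simp [evalE, List.ofFn_eq_map]

lemma headProd_eq_partialProd (i : Fin (k + 1)) :
    headProd g ν i
      = Fin.partialProd (fun j => σw G H (g j) ^ exponent ν j) i.castSucc := by
  have hi : (i : ℕ) ≤ k := Nat.le_of_lt_succ i.isLt
  rw [Fin.partialProd, List.ofFn_succ']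
  simp [headProd, List.ofFn_eq_map, List.take_append_of_le_length, hi]

lemma τw_evalE (h : H) :
    τw G H (evalE g ν) h
      = (List.ofFn fun i => τw G H (g i ^ exponent ν i) ((headProd g ν i)⁻¹ * h)).prod := by
  simp only [evalE_eq_prod_ofFn, τw_prod_ofFn, σw_pow, headProd_eq_partialProd]

open Classical in
/-- The value of `τ(a)` as a function of the two components of `a = (i, p)`, extended to all
positions `p`, including those outside `supp(gᵢ)`. -/
noncomputable def tauValAt (i : Fin (k + 1)) (p : H) : G :=
  if σw G H (g i) = 1 then τw G H (g i) p ^ exponent ν i else τw G H (g i) p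

lemma tauVal_eq_tauValAt (a : Addr g) : tauVal g a ν = tauValAt g ν a.1.1 a.1.2 := by
  obtain ⟨i, p, hp, rfl⟩ := a.exists_eq_mk
  cases i using Fin.lastCases with
  | cast i => simp [tauVal, tauValAt]
  | last => by_cases hs : σw G H (g (Fin.last k)) = 1 <;> simp [tauVal, tauValAt, hs]

lemma tauValAt_eq_one {i : Fin (k + 1)} {p : H}
    (hp : p ∉ Function.mulSupport (τw G H (g i))) : tauValAt g ν i p = 1 := by
  simp [tauValAt, Function.notMem_mulSupport.1 hp]

open Classical in
/-- The number of translates of `τ(gᵢ)` that occur in the `i`-th factor of `ν(E)`; when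
`σ(gᵢ) = 1`, all copies of `gᵢ` act at the same place and are counted once. -/
noncomputable def numTranslates (i : Fin (k + 1)) : ℕ :=
  if σw G H (g i) = 1 then 1 else exponent ν i

/-- The positions at which the successive translates of `τ(gᵢ)` are evaluated when computing the
value of `τ(ν(E))` at `h`, in reading order. -/
noncomputable def readPositions (h : H) (i : Fin (k + 1)) : List H :=
  (List.range (numTranslates g ν i)).map
    fun y => (σw G H (g i) ^ y)⁻¹ * ((headProd g ν i)⁻¹ * h)

lemma prod_map_tauValAt_readPositions (h : H) (i : Fin (k + 1)) :
    ((readPositions g ν h i).map (tauValAt g ν i)).prod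
      = τw G H (g i ^ exponent ν i) ((headProd g ν i)⁻¹ * h) := by
  rw [τw_pow, readPositions, List.map_map]
  by_cases hs : σw G H (g i) = 1
  · simp [numTranslates, tauValAt, hs]
  · simp [numTranslates, tauValAt, hs, Function.comp_def]

lemma mem_clusterAt_iff (h : H) (a : Addr g) :
    a ∈ clusterAt g ν h ↔ ∃ y : ℕ, (σw G H (g a.1.1) ≠ 1 → y < exponent ν a.1.1) ∧
      headProd g ν a.1.1 * σw G H (g a.1.1) ^ y * a.1.2 = h := by
  obtain ⟨i, p, hp, rfl⟩ := a.exists_eq_mk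
  cases i using Fin.lastCases with
  | cast i => simp [clusterAt]
  | last =>
    by_cases hs : σw G H (g (Fin.last k)) = 1 <;> simp [clusterAt, hs]

lemma mem_clusterAt_iff_mem_readPositions (h : H) (a : Addr g) :
    a ∈ clusterAt g ν h ↔ a.1.2 ∈ readPositions g ν h a.1.1 := by
  rw [mem_clusterAt_iff]
  by_cases hs : σw G H (g a.1.1) = 1
  · simp [readPositions, numTranslates, hs, eq_inv_mul_iff_mul_eq]
  · simp [readPositions, numTranslates, hs, eq_inv_mul_iff_mul_eq, mul_assoc, eq_comm (b := a.1.2)]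

end Expression

section Addresses

variable {G H : Type*} [Group G] [Group H] {k : ℕ} (g : Fin (k + 1) → RW G H)

/-- The part of the order on addresses that is common to all admissible linear orders: the
comparison of indices and, within an index `i ≤ k` with `σ(gᵢ) ≠ 1`, the relation `≼_{σ(gᵢ)}`. -/
def ForcedLE (a b : Addr g) : Prop :=
  a.1.1 < b.1.1 ∨ a.1.1 = b.1.1 ∧ (a.1.1 : ℕ) < k ∧ σw G H (g a.1.1) ≠ 1 ∧
    ∃ n : ℕ, a.1.2 = σw G H (g a.1.1) ^ n * b.1.2

variable {g}

lemma GoodOrder.le_of_forcedLE {le : Addr g → Addr g → Prop} (hle : GoodOrder g le)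
    {a b : Addr g} (hab : ForcedLE g a b) : le a b := by
  obtain ⟨-, -, -, le_of_lt, le_of_pow⟩ := hle
  rcases hab with hlt | ⟨heq, hk, hs, hpow⟩
  · exact le_of_lt a b hlt
  · exact le_of_pow a b heq hk hs hpow

lemma prodOver.mono {le le' : Addr g → Addr g → Prop} {C : Set (Addr g)} {κ : Fin k → ℕ} {v : G}
    (hv : prodOver g le C κ v) (hle : ∀ a b, le a b → le' a b) : prodOver g le' C κ v := by
  obtain ⟨l, hnodup, hmem, hsorted, hprod⟩ := hv
  exact ⟨l, hnodup, hmem, hsorted.imp (hle _ _), hprod⟩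

variable (g)

open Classical in
/-- The address `(i, p)` as a list of length one, or the empty list if `p ∉ supp(gᵢ)`. -/
noncomputable def addrAt (i : Fin (k + 1)) (p : H) : List (Addr g) :=
  if hp : p ∈ Function.mulSupport (τw G H (g i)) then [Addr.mk i p hp] else []

/-- The addresses `(i, p)` with `p` in `P i`, listed by increasing `i` and, for each `i`, in the
order of `P i`. -/
noncomputable def addrList (P : Fin (k + 1) → List H) : List (Addr g) :=
  (List.finRange (k + 1)).flatMap fun i => (P i).flatMap (addrAt g i)

variable {g}

lemma mem_addrAt {i : Fin (k + 1)} {p : H} {a : Addr g} : a ∈ addrAt g i p ↔ a.1 = (i, p) := by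
  unfold addrAt
  split_ifs with hp
  · exact List.mem_singleton.trans Subtype.ext_iff
  · refine iff_of_false List.not_mem_nil fun ha => hp ?_
    have hsupp := a.2
    rwa [ha] at hsupp

lemma pairwise_addrAt (R : Addr g → Addr g → Prop) (i : Fin (k + 1)) (p : H) :
    (addrAt g i p).Pairwise R := by
  unfold addrAt
  split_ifs <;> simp

lemma mem_addrList {P : Fin (k + 1) → List H} {a : Addr g} :
    a ∈ addrList g P ↔ a.1.2 ∈ P a.1.1 := by
  simp [addrList, mem_addrAt, Prod.ext_iff]

lemma pairwise_addrList {P : Fin (k + 1) → List H} {R : Addr g → Addr g → Prop}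
    (hlt : ∀ a b : Addr g, a.1.1 < b.1.1 → R a b)
    (hP : ∀ i, (P i).Pairwise fun p q => ∀ a b : Addr g, a.1 = (i, p) → b.1 = (i, q) → R a b) :
    (addrList g P).Pairwise R := by
  refine List.pairwise_flatMap.2 ⟨fun i _ => List.pairwise_flatMap.2 ⟨?_, ?_⟩, ?_⟩
  · exact fun p _ => pairwise_addrAt R i p
  · exact (hP i).imp fun hpq a ha b hb => hpq a b (mem_addrAt.1 ha) (mem_addrAt.1 hb)
  · refine (List.pairwise_lt_finRange (k + 1)).imp fun {i j} hij a ha b hb => hlt a b ?_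
    simp only [List.mem_flatMap, mem_addrAt] at ha hb
    obtain ⟨p, -, ha⟩ := ha
    obtain ⟨q, -, hb⟩ := hb
    rwa [ha, hb]

lemma prod_map_tauVal_addrAt (ν : Fin k → ℕ) (i : Fin (k + 1)) (p : H) :
    ((addrAt g i p).map fun a => tauVal g a ν).prod = tauValAt g ν i p := by
  unfold addrAt
  split_ifs with hp
  · simp [tauVal_eq_tauValAt]
  · simp [tauValAt_eq_one g ν hp]

lemma prod_map_tauVal_addrList (ν : Fin k → ℕ) (P : Fin (k + 1) → List H) :
    ((addrList g P).map fun a => tauVal g a ν).prod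
      = (List.ofFn fun i => ((P i).map (tauValAt g ν i)).prod).prod := by
  simp only [addrList, List.flatMap_def, List.map_flatten, List.prod_flatten, List.map_map,
    Function.comp_def, prod_map_tauVal_addrAt, List.ofFn_eq_map]

end Addresses

section Sorted

variable {G H : Type*} [Group G] [Group H] {k : ℕ} {g : Fin (k + 1) → RW G H}

lemma pairwise_readPositions
    (htf : ∀ i : Fin k, σw G H (g i.castSucc) = 1 ∨
        ∀ n : ℕ, σw G H (g i.castSucc) ^ n = 1 → n = 0)
    (ν : Fin k → ℕ) (h : H) (i : Fin (k + 1)) :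
    (readPositions g ν h i).Pairwise fun p q => p ≠ q ∧
      (i : ℕ) < k ∧ σw G H (g i) ≠ 1 ∧ ∃ n : ℕ, p = σw G H (g i) ^ n * q := by
  by_cases hs : σw G H (g i) = 1
  · simp [readPositions, numTranslates, hs]
  cases i using Fin.lastCases with
  | last => simp [readPositions, numTranslates, hs]
  | cast i =>
    have hinj : Function.Injective fun n : ℕ => σw G H (g i.castSucc) ^ n := by
      rw [injective_pow_iff_not_isOfFinOrder, isOfFinOrder_iff_pow_eq_one]
      rintro ⟨n, hpos, hn⟩
      exact hpos.ne' ((htf i).resolve_left hs n hn)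
    exact (pairwise_map_range_pow_inv_mul hinj _ _).imp
      fun ⟨hne, hpow⟩ => ⟨hne, i.isLt, hs, hpow⟩

lemma pairwise_addrList_readPositions
    (htf : ∀ i : Fin k, σw G H (g i.castSucc) = 1 ∨
        ∀ n : ℕ, σw G H (g i.castSucc) ^ n = 1 → n = 0)
    (ν : Fin k → ℕ) (h : H) :
    (addrList g (readPositions g ν h)).Pairwise fun a b => a ≠ b ∧ ForcedLE g a b := by
  refine pairwise_addrList (fun a b hab => ⟨?_, Or.inl hab⟩) fun i => ?_
  · rintro rfl
    exact hab.false
  · refine (pairwise_readPositions htf ν h i).imp ?_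
    rintro p q ⟨hne, hk, hs, hpow⟩ ⟨_, _⟩ ⟨_, _⟩ rfl rfl
    exact ⟨fun heq => hne (congrArg (fun a : Addr g => a.1.2) heq),
      Or.inr ⟨rfl, hk, hs, hpow⟩⟩

end Sorted

end WreathPaper

open WreathPaper in
theorem statement9_general {G H : Type*} [Group G] [Group H] {k : ℕ}
    (g : Fin (k + 1) → RW G H)
    (htf : ∀ i : Fin k, σw G H (g i.castSucc) = 1 ∨
        ∀ n : ℕ, σw G H (g i.castSucc) ^ n = 1 → n = 0)
    (ν : Fin k → ℕ) (h : H) :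
    prodOver g (ForcedLE g) (clusterAt g ν h) ν (τw G H (evalE g ν) h) := by
  have hsorted := pairwise_addrList_readPositions htf ν h
  refine ⟨addrList g (readPositions g ν h), hsorted.imp And.left, fun a => ?_,
    hsorted.imp And.right, ?_⟩
  · rw [mem_addrList, mem_clusterAt_iff_mem_readPositions]
  · simp only [prod_map_tauVal_addrList, prod_map_tauValAt_readPositions, τw_evalE]

open WreathPaper Function in
/-- For a fixed torsion-free knapsack expression `E = g₁^{x₁} ⋯ g_k^{x_k} g_{k+1}`
over `G ≀ H` with variable partition `V_E = S ⊎ M` and a fixed admissible linear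
order on the addresses: for every valuation `ν = μ ⊕ κ` (`μ ∈ ℕ^M`, `κ ∈ ℕ^S`)
and every `h ∈ H`, with `C = A_{μ,h}`, we have `τ(ν(E))(h) = κ(E_C)`. -/
theorem statement9 {G H : Type*} [Group G] [Group H] (k : ℕ)
    (g : Fin (k + 1) → ↥(RW G H))
    (htf : ∀ i : Fin k, σw G H (g i.castSucc) = 1 ∨
        ∀ n : ℕ, σw G H (g i.castSucc) ^ n = 1 → n = 0)
    (le : Addr g → Addr g → Prop) (hle : GoodOrder g le)
    (ν : Fin k → ℕ) (h : H) :
    prodOver g le (clusterAt g ν h) ν (τw G H (evalE g ν) h) :=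
  (statement9_general g htf ν h).mono fun _ _ => hle.le_of_forcedLE
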